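/- For every v ∈ [619/1000, 990/1000], the rendezvous value of the asymmetric rendezvous game on the line with initial distance 1, slow-player speed bound v and fast-player speed bound 1, equals V(v) = (16v²+28v+8)/(1+v)³, achieved by the strategy in which the slow player moves at maximal speed from the start with direction pattern (−v, +v, −v, +v) between consecutive rendezvous times. -/

import Mathlib

/-!
The four possible opponents are abbreviated `A`, `B`, `C`, `E`; meeting them at time `t` means
`f t = 1 + g t`, `f t = 1 - g t`, `f t = -1 + g t`, `f t = -1 - g t` respectively.

**Lower bound.** Once the order in which the opponents are met is fixed, minimising the sum of
the meeting times, given only the speed bounds between consecutive meetings, is a linear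
programme in the meeting times and the positions of `f` and `g` at those times. Weak duality
(`dual_bound`) turns any multipliers `Pᵢ`, `Qᵢ` with `v|Pᵢ| + |Qᵢ| ≤ 5 - i` on the `i`-th interval
into a lower bound. The reflections `f ↦ -f` and `g ↦ -g` act simply transitively on the opponents,
so `A` may be assumed to be met first, and explicit multipliers (the lemmas `order_ABCE`, …,
`order_AECB_slow`) settle the six remaining orders. They are vertices of the dual polytopes, cleared of the
denominators `(1 + v) ^ 3` or `(1 + v) ^ 4`; for the order `A, E, C, B` the vertex depends on `v`.
The order `A, E, B, C` gives exactly `num v = 16v² + 28v + 8`, the others at least that.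

**Upper bound.** In `slowPath` and `fastPath` both players always move at full speed, and they are
in position to meet `C`, `B`, `E`, `A`, in this order, at explicit times with sum
`num v / (1 + v) ^ 3`. The first meeting times are at most these, and by the lower bound their sum
cannot be smaller, so they coincide with them; no separate check that no meeting happens earlier is
needed.
-/

open Set

/-- `Strat α` is the set of trajectories with speed bound `α`: functions starting at `0`
which are `α`-Lipschitz on `[0, ∞)`. -/
def Strat (α : ℝ) : Set (ℝ → ℝ) :=
  {f | f 0 = 0 ∧ ∀ s t : ℝ, 0 ≤ s → 0 ≤ t → |f s - f t| ≤ α * |s - t|}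

/-- The set of times at which player I (trajectory `f`) meets the agent of player II
starting at `o` with forward direction `b` (trajectory `o + b • g`). -/
def meetSet (f g : ℝ → ℝ) (o b : ℝ) : Set ℝ := {t | 0 ≤ t ∧ f t = o + b * g t}

/-- The rendezvous time with the agent `(o, b)`. -/
noncomputable def meetTime (f g : ℝ → ℝ) (o b : ℝ) : ℝ := sInf (meetSet f g o b)

/-- All four rendezvous times are finite, i.e. the four meeting sets are nonempty. -/
def AllFinite (f g : ℝ → ℝ) : Prop :=
  (meetSet f g 1 1).Nonempty ∧ (meetSet f g 1 (-1)).Nonempty ∧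
    (meetSet f g (-1) 1).Nonempty ∧ (meetSet f g (-1) (-1)).Nonempty

/-- The sum `t¹ + t² + t³ + t⁴` of the four rendezvous times. -/
noncomputable def sumTimes (f g : ℝ → ℝ) : ℝ :=
  meetTime f g 1 1 + meetTime f g 1 (-1) + meetTime f g (-1) 1 + meetTime f g (-1) (-1)

/-- The multiset of the four rendezvous times of the pair `(f, g)`. -/
noncomputable def timesMultiset (f g : ℝ → ℝ) : Multiset ℝ :=
  {meetTime f g 1 1, meetTime f g 1 (-1), meetTime f g (-1) 1, meetTime f g (-1) (-1)}

/-- The rendezvous value of the game: infimum of `t¹ + t² + t³ + t⁴` over all pairs of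
strategies with finite rendezvous times, for slow-player speed bound `v`. -/
noncomputable def V (v : ℝ) : ℝ :=
  sInf {S | ∃ f ∈ Strat v, ∃ g ∈ Strat 1, AllFinite f g ∧ S = sumTimes f g}

/-- The numerator of the rendezvous value. -/
def num (v : ℝ) : ℝ := 16 * v ^ 2 + 28 * v + 8

variable {v : ℝ} {f g : ℝ → ℝ} {tA tB tC tE : ℝ}

/-! ### Weak duality for a fixed order of meetings -/

lemma feasible {P Q c : ℝ} (h1 : v * P + Q ≤ c) (h2 : v * P - Q ≤ c) (h3 : -(v * P) + Q ≤ c)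
    (h4 : -(v * P) - Q ≤ c) : |v * P| + |Q| ≤ c := by
  rcases abs_cases (v * P) with h | h <;> rcases abs_cases Q with h' | h' <;> linarith

/-- Contribution of a single interval `[s, t]` to the dual bound. -/
lemma interval_bound (hf : f ∈ Strat v) (hg : g ∈ Strat 1) {s t : ℝ} (hs : 0 ≤ s) (hst : s ≤ t)
    {P Q c : ℝ} (h : |v * P| + |Q| ≤ c) (hv : 0 ≤ v) :
    P * (f t - f s) + Q * (g t - g s) ≤ c * (t - s) := by
  have hf' := hf.2 t s (hs.trans hst) hs
  have hg' := hg.2 t s (hs.trans hst) hs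
  rw [abs_of_nonneg (sub_nonneg.2 hst)] at hf' hg'
  have e1 : P * (f t - f s) ≤ |v * P| * (t - s) := by
    calc P * (f t - f s) ≤ |P * (f t - f s)| := le_abs_self _
      _ = |P| * |f t - f s| := abs_mul _ _
      _ ≤ |P| * (v * (t - s)) := by gcongr
      _ = |v * P| * (t - s) := by rw [abs_mul, abs_of_nonneg hv]; ring
  have e2 : Q * (g t - g s) ≤ |Q| * (t - s) := by
    calc Q * (g t - g s) ≤ |Q * (g t - g s)| := le_abs_self _
      _ = |Q| * |g t - g s| := abs_mul _ _
      _ ≤ |Q| * (1 * (t - s)) := by gcongr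
      _ = |Q| * (t - s) := by ring
  calc _ ≤ (|v * P| + |Q|) * (t - s) := by linarith
    _ ≤ c * (t - s) := mul_le_mul_of_nonneg_right h (sub_nonneg.2 hst)

/-- Weak duality: `t₁ + t₂ + t₃ + t₄ = 4t₁ + 3(t₂ - t₁) + 2(t₃ - t₂) + (t₄ - t₃)`, and multipliers
obeying the capacity of each interval bound this (up to the common denominator `K`) from below. -/
lemma dual_bound {t₁ t₂ t₃ t₄ K P1 Q1 P2 Q2 P3 Q3 P4 Q4 : ℝ} (hf : f ∈ Strat v)
    (hg : g ∈ Strat 1) (ht : 0 ≤ t₁) (ht1 : t₁ ≤ t₂) (ht2 : t₂ ≤ t₃) (ht3 : t₃ ≤ t₄)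
    (h1 : |v * P1| + |Q1| ≤ K * 4) (h2 : |v * P2| + |Q2| ≤ K * 3)
    (h3 : |v * P3| + |Q3| ≤ K * 2) (h4 : |v * P4| + |Q4| ≤ K * 1) :
    P1 * f t₁ + Q1 * g t₁ + (P2 * (f t₂ - f t₁) + Q2 * (g t₂ - g t₁)) +
      (P3 * (f t₃ - f t₂) + Q3 * (g t₃ - g t₂)) + (P4 * (f t₄ - f t₃) + Q4 * (g t₄ - g t₃))
      ≤ K * (t₁ + t₂ + t₃ + t₄) := by
  have hv : 0 ≤ v := by
    have := (abs_nonneg _).trans (hf.2 0 1 le_rfl zero_le_one)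
    norm_num at this
    exact this
  have i1 := interval_bound hf hg le_rfl ht h1 hv
  have i2 := interval_bound hf hg ht ht1 h2 hv
  have i3 := interval_bound hf hg (ht.trans ht1) ht2 h3 hv
  have i4 := interval_bound hf hg (ht.trans (ht1.trans ht2)) ht3 h4 hv
  rw [hf.1, hg.1] at i1
  linarith

/-! ### The six orders in which `A` is met first -/

lemma order_ABCE (h0 : 0 ≤ v) (h1 : v ≤ 1) (h2 : 1 ≤ v + v ^ 2)
    (hf : f ∈ Strat v) (hg : g ∈ Strat 1)
    (hA : f tA = 1 + g tA) (hB : f tB = 1 - g tB)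
    (hC : f tC = -1 + g tC) (hE : f tE = -1 - g tE)
    (ho : 0 ≤ tA) (ho1 : tA ≤ tB) (ho2 : tB ≤ tC) (ho3 : tC ≤ tE) :
    num v ≤ (1 + v) ^ 3 * (tA + tB + tC + tE) := by
  have p2 : 0 ≤ v ^ 2 := by positivity
  have p3 : v ^ 3 ≤ v ^ 2 := by nlinarith
  have p3n : 0 ≤ v ^ 3 := by positivity
  have p4 : v ^ 4 ≤ v ^ 3 := by nlinarith
  have p4n : 0 ≤ v ^ 4 := by positivity
  have key := dual_bound (K := (1 + v) ^ 4) hf hg ho ho1 ho2 ho3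
    (P1 := 4 + 28 * v + 20 * v ^ 2 + 4 * v ^ 3) (Q1 := -4 - 12 * v + 4 * v ^ 2 + 4 * v ^ 3)
    (P2 := -3 + v + 7 * v ^ 2 + 3 * v ^ 3) (Q2 := 3 + 15 * v + 17 * v ^ 2 + 5 * v ^ 3)
    (P3 := -4 - 10 * v - 8 * v ^ 2 - 2 * v ^ 3) (Q3 := 2 + 4 * v + 2 * v ^ 2)
    (P4 := -1 - 3 * v - 3 * v ^ 2 - v ^ 3) (Q4 := -1 - 3 * v - 3 * v ^ 2 - v ^ 3)
    (feasible (by nlinarith) (by nlinarith) (by nlinarith) (by nlinarith))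
    (feasible (by nlinarith) (by nlinarith) (by nlinarith) (by nlinarith))
    (feasible (by nlinarith) (by nlinarith) (by nlinarith) (by nlinarith))
    (feasible (by nlinarith) (by nlinarith) (by nlinarith) (by nlinarith))
  have hval : 12 + 48 * v + 36 * v ^ 2 + 8 * v ^ 3
      ≤ (1 + v) ^ 4 * (tA + tB + tC + tE) := by
    refine le_trans (le_of_eq ?_) key
    rw [hA, hB, hC, hE]
    ring
  refine le_of_mul_le_mul_left (a := 1 + v) ?_ (by linarith)
  calc (1 + v) * num v ≤ _ := ?_
    _ ≤ _ := hval
    _ = _ := by ring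
  unfold num
  nlinarith

lemma order_ABEC (h0 : 0 ≤ v) (h1 : v ≤ 1) (h2 : 1 ≤ v + v ^ 2)
    (hf : f ∈ Strat v) (hg : g ∈ Strat 1)
    (hA : f tA = 1 + g tA) (hB : f tB = 1 - g tB)
    (hE : f tE = -1 - g tE) (hC : f tC = -1 + g tC)
    (ho : 0 ≤ tA) (ho1 : tA ≤ tB) (ho2 : tB ≤ tE) (ho3 : tE ≤ tC) :
    num v ≤ (1 + v) ^ 3 * (tA + tB + tE + tC) := by
  have p2 : 0 ≤ v ^ 2 := by positivity
  have p3 : v ^ 3 ≤ v ^ 2 := by nlinarith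
  have p3n : 0 ≤ v ^ 3 := by positivity
  have p4 : v ^ 4 ≤ v ^ 3 := by nlinarith
  have p4n : 0 ≤ v ^ 4 := by positivity
  have key := dual_bound (K := (1 + v) ^ 3) hf hg ho ho1 ho2 ho3
    (P1 := 8 + 16 * v + 4 * v ^ 2) (Q1 := -4 - 4 * v + 4 * v ^ 2)
    (P2 := 1 + 4 * v + 3 * v ^ 2) (Q2 := 3 + 8 * v + 5 * v ^ 2)
    (P3 := -4 - 6 * v - 2 * v ^ 2) (Q3 := -2 - 2 * v)
    (P4 := -1 - 2 * v - v ^ 2) (Q4 := 1 + 2 * v + v ^ 2)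
    (feasible (by nlinarith) (by nlinarith) (by nlinarith) (by nlinarith))
    (feasible (by nlinarith) (by nlinarith) (by nlinarith) (by nlinarith))
    (feasible (by nlinarith) (by nlinarith) (by nlinarith) (by nlinarith))
    (feasible (by nlinarith) (by nlinarith) (by nlinarith) (by nlinarith))
  have hval : 16 + 28 * v + 8 * v ^ 2
      ≤ (1 + v) ^ 3 * (tA + tB + tE + tC) := by
    refine le_trans (le_of_eq ?_) key
    rw [hA, hB, hC, hE]
    ring
  unfold num
  nlinarith

lemma order_ACBE (h0 : 0 ≤ v) (h1 : v ≤ 1) (h2 : 1 ≤ v + v ^ 2)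
    (hf : f ∈ Strat v) (hg : g ∈ Strat 1)
    (hA : f tA = 1 + g tA) (hC : f tC = -1 + g tC)
    (hB : f tB = 1 - g tB) (hE : f tE = -1 - g tE)
    (ho : 0 ≤ tA) (ho1 : tA ≤ tC) (ho2 : tC ≤ tB) (ho3 : tB ≤ tE) :
    num v ≤ (1 + v) ^ 3 * (tA + tC + tB + tE) := by
  have p2 : 0 ≤ v ^ 2 := by positivity
  have p3 : v ^ 3 ≤ v ^ 2 := by nlinarith
  have p3n : 0 ≤ v ^ 3 := by positivity
  have p4 : v ^ 4 ≤ v ^ 3 := by nlinarith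
  have p4n : 0 ≤ v ^ 4 := by positivity
  have key := dual_bound (K := (1 + v) ^ 3) hf hg ho ho1 ho2 ho3
    (P1 := 8 + 12 * v + 4 * v ^ 2) (Q1 := -4 - 4 * v)
    (P2 := 1 - 2 * v - 3 * v ^ 2) (Q2 := 3 + 10 * v + 7 * v ^ 2)
    (P3 := 2 + 4 * v + 2 * v ^ 2) (Q3 := 2 + 4 * v + 2 * v ^ 2)
    (P4 := -1 - 2 * v - v ^ 2) (Q4 := -1 - 2 * v - v ^ 2)
    (feasible (by nlinarith) (by nlinarith) (by nlinarith) (by nlinarith))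
    (feasible (by nlinarith) (by nlinarith) (by nlinarith) (by nlinarith))
    (feasible (by nlinarith) (by nlinarith) (by nlinarith) (by nlinarith))
    (feasible (by nlinarith) (by nlinarith) (by nlinarith) (by nlinarith))
  have hval : 12 + 28 * v + 16 * v ^ 2
      ≤ (1 + v) ^ 3 * (tA + tC + tB + tE) := by
    refine le_trans (le_of_eq ?_) key
    rw [hA, hB, hC, hE]
    ring
  unfold num
  nlinarith

lemma order_ACEB (h0 : 0 ≤ v) (h1 : v ≤ 1) (h2 : 1 ≤ v + v ^ 2)
    (hf : f ∈ Strat v) (hg : g ∈ Strat 1)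
    (hA : f tA = 1 + g tA) (hC : f tC = -1 + g tC)
    (hE : f tE = -1 - g tE) (hB : f tB = 1 - g tB)
    (ho : 0 ≤ tA) (ho1 : tA ≤ tC) (ho2 : tC ≤ tE) (ho3 : tE ≤ tB) :
    num v ≤ (1 + v) ^ 3 * (tA + tC + tE + tB) := by
  have p2 : 0 ≤ v ^ 2 := by positivity
  have p3 : v ^ 3 ≤ v ^ 2 := by nlinarith
  have p3n : 0 ≤ v ^ 3 := by positivity
  have p4 : v ^ 4 ≤ v ^ 3 := by nlinarith
  have p4n : 0 ≤ v ^ 4 := by positivity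
  have key := dual_bound (K := (1 + v) ^ 3) hf hg ho ho1 ho2 ho3
    (P1 := 4 * v + 4 * v ^ 2) (Q1 := -4 - 12 * v - 8 * v ^ 2)
    (P2 := -7 - 10 * v - 3 * v ^ 2) (Q2 := 3 + 2 * v - v ^ 2)
    (P3 := -2 - 4 * v - 2 * v ^ 2) (Q3 := -2 - 4 * v - 2 * v ^ 2)
    (P4 := 1 + 2 * v + v ^ 2) (Q4 := 1 + 2 * v + v ^ 2)
    (feasible (by nlinarith) (by nlinarith) (by nlinarith) (by nlinarith))
    (feasible (by nlinarith) (by nlinarith) (by nlinarith) (by nlinarith))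
    (feasible (by nlinarith) (by nlinarith) (by nlinarith) (by nlinarith))
    (feasible (by nlinarith) (by nlinarith) (by nlinarith) (by nlinarith))
  have hval : 16 + 28 * v + 12 * v ^ 2
      ≤ (1 + v) ^ 3 * (tA + tC + tE + tB) := by
    refine le_trans (le_of_eq ?_) key
    rw [hA, hB, hC, hE]
    ring
  unfold num
  nlinarith

/-- The optimal order `A, E, B, C`. The multiplier `-4+4v+4v²` is nonnegative exactly when
`v ≥ (√5 - 1)/2 = 0.618…`, which is where the lower end of the range of speeds comes from. -/
lemma order_AEBC (h0 : 0 ≤ v) (h1 : v ≤ 1) (h2 : 1 ≤ v + v ^ 2)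
    (hf : f ∈ Strat v) (hg : g ∈ Strat 1)
    (hA : f tA = 1 + g tA) (hE : f tE = -1 - g tE)
    (hB : f tB = 1 - g tB) (hC : f tC = -1 + g tC)
    (ho : 0 ≤ tA) (ho1 : tA ≤ tE) (ho2 : tE ≤ tB) (ho3 : tB ≤ tC) :
    num v ≤ (1 + v) ^ 3 * (tA + tE + tB + tC) := by
  have p2 : 0 ≤ v ^ 2 := by positivity
  have p3 : v ^ 3 ≤ v ^ 2 := by nlinarith
  have p3n : 0 ≤ v ^ 3 := by positivity
  have p4 : v ^ 4 ≤ v ^ 3 := by nlinarith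
  have p4n : 0 ≤ v ^ 4 := by positivity
  have key := dual_bound (K := (1 + v) ^ 3) hf hg ho ho1 ho2 ho3
    (P1 := -4 + 4 * v + 4 * v ^ 2) (Q1 := -4 - 16 * v - 8 * v ^ 2)
    (P2 := -5 - 8 * v - 3 * v ^ 2) (Q2 := -3 - 4 * v - v ^ 2)
    (P3 := 2 * v + 2 * v ^ 2) (Q3 := 2 + 6 * v + 4 * v ^ 2)
    (P4 := -1 - 2 * v - v ^ 2) (Q4 := 1 + 2 * v + v ^ 2)
    (feasible (by nlinarith) (by nlinarith) (by nlinarith) (by nlinarith))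
    (feasible (by nlinarith) (by nlinarith) (by nlinarith) (by nlinarith))
    (feasible (by nlinarith) (by nlinarith) (by nlinarith) (by nlinarith))
    (feasible (by nlinarith) (by nlinarith) (by nlinarith) (by nlinarith))
  have hval : 8 + 28 * v + 16 * v ^ 2
      ≤ (1 + v) ^ 3 * (tA + tE + tB + tC) := by
    refine le_trans (le_of_eq ?_) key
    rw [hA, hB, hC, hE]
    ring
  unfold num
  nlinarith

/-- Order `A, E, C, B` for the larger `v`: every interval constraint is tight in the dual. -/
lemma order_AECB_fast (h0 : 0 ≤ v) (h1 : v ≤ 1) (h2 : 1 ≤ v + v ^ 2)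
    (hp : 1 + v ≤ 3 * v ^ 2 + v ^ 3)
    (hf : f ∈ Strat v) (hg : g ∈ Strat 1)
    (hA : f tA = 1 + g tA) (hE : f tE = -1 - g tE)
    (hC : f tC = -1 + g tC) (hB : f tB = 1 - g tB)
    (ho : 0 ≤ tA) (ho1 : tA ≤ tE) (ho2 : tE ≤ tC) (ho3 : tC ≤ tB) :
    num v ≤ (1 + v) ^ 3 * (tA + tE + tC + tB) := by
  have p2 : 0 ≤ v ^ 2 := by positivity
  have p3 : v ^ 3 ≤ v ^ 2 := by nlinarith
  have p3n : 0 ≤ v ^ 3 := by positivity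
  have p4 : v ^ 4 ≤ v ^ 3 := by nlinarith
  have p4n : 0 ≤ v ^ 4 := by positivity
  have key := dual_bound (K := (1 + v) ^ 4) hf hg ho ho1 ho2 ho3
    (P1 := -4 - 4 * v + 12 * v ^ 2 + 4 * v ^ 3) (Q1 := -4 - 20 * v - 28 * v ^ 2 - 4 * v ^ 3)
    (P2 := -5 - 17 * v - 15 * v ^ 2 - 3 * v ^ 3) (Q2 := -3 - 7 * v - v ^ 2 + 3 * v ^ 3)
    (P3 := -2 * v - 4 * v ^ 2 - 2 * v ^ 3) (Q3 := 2 + 8 * v + 10 * v ^ 2 + 4 * v ^ 3)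
    (P4 := 1 + 3 * v + 3 * v ^ 2 + v ^ 3) (Q4 := 1 + 3 * v + 3 * v ^ 2 + v ^ 3)
    (feasible (by nlinarith) (by nlinarith) (by nlinarith) (by nlinarith))
    (feasible (by nlinarith) (by nlinarith) (by nlinarith) (by nlinarith))
    (feasible (by nlinarith) (by nlinarith) (by nlinarith) (by nlinarith))
    (feasible (by nlinarith) (by nlinarith) (by nlinarith) (by nlinarith))
  have hval : 8 + 36 * v + 48 * v ^ 2 + 12 * v ^ 3
      ≤ (1 + v) ^ 4 * (tA + tE + tC + tB) := by
    refine le_trans (le_of_eq ?_) key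
    rw [hA, hB, hC, hE]
    ring
  refine le_of_mul_le_mul_left (a := 1 + v) ?_ (by linarith)
  calc (1 + v) * num v ≤ _ := ?_
    _ ≤ _ := hval
    _ = _ := by ring
  unfold num
  nlinarith

/-- Order `A, E, C, B` for the smaller `v`, where the dual optimum has changed: the position of
player I gets multiplier `0` on the first interval and the constraint of the second interval is
slack. -/
lemma order_AECB_slow (h0 : 0 ≤ v) (h1 : v ≤ 1) (h2 : 1 ≤ v + v ^ 2)
    (hp : 3 * v ^ 2 + v ^ 3 ≤ 1 + v)
    (hf : f ∈ Strat v) (hg : g ∈ Strat 1)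
    (hA : f tA = 1 + g tA) (hE : f tE = -1 - g tE)
    (hC : f tC = -1 + g tC) (hB : f tB = 1 - g tB)
    (ho : 0 ≤ tA) (ho1 : tA ≤ tE) (ho2 : tE ≤ tC) (ho3 : tC ≤ tB) :
    num v ≤ (1 + v) ^ 3 * (tA + tE + tC + tB) := by
  have p2 : 0 ≤ v ^ 2 := by positivity
  have p3 : v ^ 3 ≤ v ^ 2 := by nlinarith
  have p3n : 0 ≤ v ^ 3 := by positivity
  have p4 : v ^ 4 ≤ v ^ 3 := by nlinarith
  have p4n : 0 ≤ v ^ 4 := by positivity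
  have key := dual_bound (K := (1 + v) ^ 3) hf hg ho ho1 ho2 ho3
    (P1 := 0) (Q1 := -4 - 12 * v - 12 * v ^ 2 - 4 * v ^ 3)
    (P2 := -3 - 10 * v - 9 * v ^ 2 - 2 * v ^ 3) (Q2 := -1 - 2 * v - 3 * v ^ 2 - 2 * v ^ 3)
    (P3 := -2 * v - 2 * v ^ 2) (Q3 := 2 + 6 * v + 4 * v ^ 2)
    (P4 := 1 + 2 * v + v ^ 2) (Q4 := 1 + 2 * v + v ^ 2)
    (feasible (by nlinarith) (by nlinarith) (by nlinarith) (by nlinarith))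
    (feasible (by nlinarith) (by nlinarith) (by nlinarith) (by nlinarith))
    (feasible (by nlinarith) (by nlinarith) (by nlinarith) (by nlinarith))
    (feasible (by nlinarith) (by nlinarith) (by nlinarith) (by nlinarith))
  have hval : 8 + 24 * v + 20 * v ^ 2 + 4 * v ^ 3
      ≤ (1 + v) ^ 3 * (tA + tE + tC + tB) := by
    refine le_trans (le_of_eq ?_) key
    rw [hA, hB, hC, hE]
    ring
  unfold num
  nlinarith

/-! ### The lower bound -/

/-- The lower bound when `A` is met first. -/
lemma bound_of_first (h0 : 0 ≤ v) (h1 : v ≤ 1) (h2 : 1 ≤ v + v ^ 2)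
    (hf : f ∈ Strat v) (hg : g ∈ Strat 1)
    (hA : f tA = 1 + g tA) (hB : f tB = 1 - g tB) (hC : f tC = -1 + g tC)
    (hE : f tE = -1 - g tE) (ho : 0 ≤ tA) (hAB : tA ≤ tB) (hAC : tA ≤ tC) (hAE : tA ≤ tE) :
    num v ≤ (1 + v) ^ 3 * (tA + tB + tC + tE) := by
  rcases le_total tB tC with hBC | hCB
  · rcases le_total tC tE with hCE | hEC
    · linarith [order_ABCE h0 h1 h2 hf hg hA hB hC hE ho hAB hBC hCE]
    · rcases le_total tB tE with hBE | hEB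
      · linarith [order_ABEC h0 h1 h2 hf hg hA hB hE hC ho hAB hBE hEC]
      · linarith [order_AEBC h0 h1 h2 hf hg hA hE hB hC ho hAE hEB hBC]
  · rcases le_total tB tE with hBE | hEB
    · linarith [order_ACBE h0 h1 h2 hf hg hA hC hB hE ho hAC hCB hBE]
    · rcases le_total tC tE with hCE | hEC
      · linarith [order_ACEB h0 h1 h2 hf hg hA hC hE hB ho hAC hCE hEB]
      · rcases le_total (1 + v) (3 * v ^ 2 + v ^ 3) with hp | hp
        · linarith [order_AECB_fast h0 h1 h2 hp hf hg hA hE hC hB ho hAE hEC hCB]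
        · linarith [order_AECB_slow h0 h1 h2 hp hf hg hA hE hC hB ho hAE hEC hCB]

lemma neg_mem_strat {α : ℝ} {h : ℝ → ℝ} (hh : h ∈ Strat α) : -h ∈ Strat α := by
  refine ⟨by simp [hh.1], fun s t hs ht => ?_⟩
  have : (-h) s - (-h) t = -(h s - h t) := by simp only [Pi.neg_apply]; ring
  rw [this, abs_neg]
  exact hh.2 s t hs ht

/-- The lower bound, for arbitrary (not necessarily first) meeting times. -/
lemma bound_of_meetings (h0 : 0 ≤ v) (h1 : v ≤ 1) (h2 : 1 ≤ v + v ^ 2)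
    (hf : f ∈ Strat v) (hg : g ∈ Strat 1)
    (hA : f tA = 1 + g tA) (hB : f tB = 1 - g tB) (hC : f tC = -1 + g tC)
    (hE : f tE = -1 - g tE) (oA : 0 ≤ tA) (oB : 0 ≤ tB) (oC : 0 ≤ tC) (oE : 0 ≤ tE) :
    num v ≤ (1 + v) ^ 3 * (tA + tB + tC + tE) := by
  have hf' := neg_mem_strat hf
  have hg' := neg_mem_strat hg
  have first : (tA ≤ tB ∧ tA ≤ tC ∧ tA ≤ tE) ∨ (tB ≤ tA ∧ tB ≤ tC ∧ tB ≤ tE) ∨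
      (tC ≤ tA ∧ tC ≤ tB ∧ tC ≤ tE) ∨ (tE ≤ tA ∧ tE ≤ tB ∧ tE ≤ tC) := by grind
  rcases first with ⟨a, b, c⟩ | ⟨a, b, c⟩ | ⟨a, b, c⟩ | ⟨a, b, c⟩
  · exact bound_of_first h0 h1 h2 hf hg hA hB hC hE oA a b c
  -- `g ↦ -g` exchanges `A` with `B` and `C` with `E`.
  · have := bound_of_first (tA := tB) (tB := tA) (tC := tE) (tE := tC) h0 h1 h2 hf hg'
      (by simp only [Pi.neg_apply]; linarith) (by simp only [Pi.neg_apply]; linarith)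
      (by simp only [Pi.neg_apply]; linarith) (by simp only [Pi.neg_apply]; linarith) oB a c b
    linarith
  -- Both reflections together exchange `A` with `C` and `B` with `E`.
  · have := bound_of_first (tA := tC) (tB := tE) (tC := tA) (tE := tB) h0 h1 h2 hf' hg'
      (by simp only [Pi.neg_apply]; linarith) (by simp only [Pi.neg_apply]; linarith)
      (by simp only [Pi.neg_apply]; linarith) (by simp only [Pi.neg_apply]; linarith) oC c a b
    linarith
  -- `f ↦ -f` exchanges `A` with `E` and `B` with `C`.
  · have := bound_of_first (tA := tE) (tB := tC) (tC := tB) (tE := tA) h0 h1 h2 hf' hg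
      (by simp only [Pi.neg_apply]; linarith) (by simp only [Pi.neg_apply]; linarith)
      (by simp only [Pi.neg_apply]; linarith) (by simp only [Pi.neg_apply]; linarith) oE c b a
    linarith

lemma strat_continuousOn {α : ℝ} {h : ℝ → ℝ} (hh : h ∈ Strat α) : ContinuousOn h (Ici 0) := by
  refine (LipschitzOnWith.of_dist_le_mul (K := α.toNNReal) fun s hs t ht => ?_).continuousOn
  rw [Real.dist_eq, Real.dist_eq]
  exact (hh.2 s t hs ht).trans
    (mul_le_mul_of_nonneg_right (Real.le_coe_toNNReal α) (abs_nonneg _))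

lemma meetSet_bddBelow (f g : ℝ → ℝ) (o b : ℝ) : BddBelow (meetSet f g o b) :=
  ⟨0, fun _ ht => ht.1⟩

/-- The infimum defining a meeting time is attained, by continuity of the strategies. -/
lemma meetTime_mem (hf : f ∈ Strat v) (hg : g ∈ Strat 1) {o b : ℝ}
    (hne : (meetSet f g o b).Nonempty) : meetTime f g o b ∈ meetSet f g o b := by
  refine IsClosed.csInf_mem ?_ hne (meetSet_bddBelow f g o b)
  have hc : ContinuousOn (fun t => f t - (o + b * g t)) (Ici 0) :=
    (strat_continuousOn hf).sub
      (continuousOn_const.add (continuousOn_const.mul (strat_continuousOn hg)))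
  convert hc.preimage_isClosed_of_isClosed isClosed_Ici (isClosed_singleton (x := (0 : ℝ))) using 1
  ext t
  simp [meetSet, sub_eq_zero]

lemma num_le_sumTimes (h0 : 0 ≤ v) (h1 : v ≤ 1) (h2 : 1 ≤ v + v ^ 2)
    (hf : f ∈ Strat v) (hg : g ∈ Strat 1) (hfin : AllFinite f g) :
    num v / (1 + v) ^ 3 ≤ sumTimes f g := by
  obtain ⟨nA, nB, nC, nE⟩ := hfin
  obtain ⟨oA, hA⟩ := meetTime_mem hf hg nA
  obtain ⟨oB, hB⟩ := meetTime_mem hf hg nB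
  obtain ⟨oC, hC⟩ := meetTime_mem hf hg nC
  obtain ⟨oE, hE⟩ := meetTime_mem hf hg nE
  rw [div_le_iff₀' (by positivity)]
  exact bound_of_meetings h0 h1 h2 hf hg (by linarith) (by linarith) (by linarith) (by linarith)
    oA oB oC oE

/-! ### The optimal strategy -/

/-- Zigzag with slopes `-1, 1, -1, 1` and turning points `a ≤ b ≤ c`, normalised to vanish at `0`
when `0 ≤ a`. -/
def zigzag (a b c t : ℝ) : ℝ := |t - a| - |t - b| + |t - c| - (a - b + c)

lemma zigzag_lipschitz {a b c : ℝ} (hab : a ≤ b) (hbc : b ≤ c) (s t : ℝ) :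
    |zigzag a b c s - zigzag a b c t| ≤ |s - t| := by
  unfold zigzag
  wlog hst : s ≤ t generalizing s t
  · rw [abs_sub_comm, abs_sub_comm s t]
    exact this t s (le_of_not_ge hst)
  rw [abs_of_nonpos (sub_nonpos.2 hst), abs_le]
  constructor <;>
  rcases abs_cases (s - a) with h1 | h1 <;> rcases abs_cases (s - b) with h2 | h2 <;>
  rcases abs_cases (s - c) with h3 | h3 <;> rcases abs_cases (t - a) with h4 | h4 <;>
  rcases abs_cases (t - b) with h5 | h5 <;> rcases abs_cases (t - c) with h6 | h6 <;>
  linarith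

/-- First meeting time of the optimal strategy (with `C`). -/
noncomputable def τ₁ (v : ℝ) : ℝ := 1 / (1 + v)

/-- Second meeting time of the optimal strategy (with `B`). -/
noncomputable def τ₂ (v : ℝ) : ℝ := τ₁ v + 2 * v / (1 + v) ^ 2

/-- Third meeting time of the optimal strategy (with `E`). -/
noncomputable def τ₃ (v : ℝ) : ℝ := τ₂ v + 2 / (1 + v)

/-- Fourth meeting time of the optimal strategy (with `A`). -/
noncomputable def τ₄ (v : ℝ) : ℝ := τ₃ v + (2 * v ^ 2 + 6 * v) / (1 + v) ^ 3

/-- The slow player turns at each of the first three meetings. -/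
noncomputable def slowPath (v t : ℝ) : ℝ := v * zigzag (τ₁ v) (τ₂ v) (τ₃ v) t

/-- The fast player moves forward until the second meeting and backward afterwards. -/
noncomputable def fastPath (v t : ℝ) : ℝ := τ₂ v - |t - τ₂ v|

lemma slowPath_seg₁ {s : ℝ} (h12 : τ₁ v ≤ τ₂ v) (h23 : τ₂ v ≤ τ₃ v) (hs : s ≤ τ₁ v) :
    slowPath v s = -v * s := by
  unfold slowPath zigzag
  rw [abs_of_nonpos (by linarith), abs_of_nonpos (by linarith), abs_of_nonpos (by linarith)]
  ring

lemma slowPath_seg₂ {s : ℝ} (h23 : τ₂ v ≤ τ₃ v) (h1 : τ₁ v ≤ s) (h2 : s ≤ τ₂ v) :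
    slowPath v s = -v * τ₁ v + v * (s - τ₁ v) := by
  unfold slowPath zigzag
  rw [abs_of_nonneg (by linarith), abs_of_nonpos (by linarith), abs_of_nonpos (by linarith)]
  ring

lemma slowPath_seg₃ {s : ℝ} (h12 : τ₁ v ≤ τ₂ v) (h2 : τ₂ v ≤ s) (h3 : s ≤ τ₃ v) :
    slowPath v s = -v * τ₁ v + v * (τ₂ v - τ₁ v) - v * (s - τ₂ v) := by
  unfold slowPath zigzag
  rw [abs_of_nonneg (by linarith), abs_of_nonneg (by linarith), abs_of_nonpos (by linarith)]
  ring

lemma slowPath_seg₄ {s : ℝ} (h12 : τ₁ v ≤ τ₂ v) (h23 : τ₂ v ≤ τ₃ v) (h3 : τ₃ v ≤ s) :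
    slowPath v s =
      -v * τ₁ v + v * (τ₂ v - τ₁ v) - v * (τ₃ v - τ₂ v) + v * (s - τ₃ v) := by
  unfold slowPath zigzag
  rw [abs_of_nonneg (by linarith), abs_of_nonneg (by linarith), abs_of_nonneg (by linarith)]
  ring

/-- For `v ∈ [619/1000, 990/1000]` the rendezvous value equals
`(16v² + 28v + 8)/(1 + v)³`, and it is achieved by a strategy in which the slow player
moves at maximal speed from the start, with direction pattern `(-v, +v, -v, +v)` between
consecutive rendezvous times. -/
theorem rendezvous_value_large_speed (v : ℝ) (hv : v ∈ Icc (619 / 1000 : ℝ) (990 / 1000)) :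
    V v = (16 * v ^ 2 + 28 * v + 8) / (1 + v) ^ 3 ∧
      ∃ f ∈ Strat v, ∃ g ∈ Strat 1, AllFinite f g ∧ sumTimes f g = V v ∧
        ∃ t1 t2 t3 t4 : ℝ, 0 ≤ t1 ∧ t1 ≤ t2 ∧ t2 ≤ t3 ∧ t3 ≤ t4 ∧
          timesMultiset f g = {t1, t2, t3, t4} ∧
          (∀ s, 0 ≤ s → s ≤ t1 → f s = -v * s) ∧
          (∀ s, t1 ≤ s → s ≤ t2 → f s = f t1 + v * (s - t1)) ∧
          (∀ s, t2 ≤ s → s ≤ t3 → f s = f t2 - v * (s - t2)) ∧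
          (∀ s, t3 ≤ s → s ≤ t4 → f s = f t3 + v * (s - t3)) := by
  obtain ⟨hv1, hv2⟩ := hv
  have h0 : 0 ≤ v := by linarith
  have h1 : v ≤ 1 := by linarith
  have h2 : 1 ≤ v + v ^ 2 := by nlinarith
  have hpos : 0 < 1 + v := by linarith
  have o1 : 0 ≤ τ₁ v := by unfold τ₁; positivity
  have o12 : τ₁ v ≤ τ₂ v := le_add_of_nonneg_right (by positivity)
  have o23 : τ₂ v ≤ τ₃ v := le_add_of_nonneg_right (by positivity)
  have o34 : τ₃ v ≤ τ₄ v := le_add_of_nonneg_right (by positivity)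
  have o2 := o1.trans o12
  have o3 := o2.trans o23
  have hf : slowPath v ∈ Strat v := by
    refine ⟨by rw [slowPath_seg₁ o12 o23 o1, mul_zero], fun s t _ _ => ?_⟩
    unfold slowPath
    rw [← mul_sub, abs_mul, abs_of_nonneg h0]
    exact mul_le_mul_of_nonneg_left (zigzag_lipschitz o12 o23 s t) h0
  have hg : fastPath v ∈ Strat 1 := by
    refine ⟨by simp [fastPath, abs_of_nonneg o2], fun s t _ _ => ?_⟩
    have := abs_abs_sub_abs_le (t - τ₂ v) (s - τ₂ v)
    unfold fastPath
    rw [one_mul, abs_sub_comm s t]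
    rwa [sub_sub_sub_cancel_right,
      show |t - τ₂ v| - |s - τ₂ v| = τ₂ v - |s - τ₂ v| - (τ₂ v - |t - τ₂ v|) by ring] at this
  have mC : τ₁ v ∈ meetSet (slowPath v) (fastPath v) (-1) 1 := by
    refine ⟨o1, ?_⟩
    rw [slowPath_seg₁ o12 o23 le_rfl, fastPath, abs_of_nonpos (by linarith)]
    unfold τ₁
    field_simp
    ring
  have mB : τ₂ v ∈ meetSet (slowPath v) (fastPath v) 1 (-1) := by
    refine ⟨o2, ?_⟩
    rw [slowPath_seg₂ o23 o12 le_rfl, fastPath, abs_of_nonpos (by linarith)]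
    unfold τ₂ τ₁
    field_simp
    ring
  have mE : τ₃ v ∈ meetSet (slowPath v) (fastPath v) (-1) (-1) := by
    refine ⟨o3, ?_⟩
    rw [slowPath_seg₃ o12 o23 le_rfl, fastPath, abs_of_nonneg (by linarith)]
    unfold τ₃ τ₂ τ₁
    field_simp
    ring
  have mA : τ₄ v ∈ meetSet (slowPath v) (fastPath v) 1 1 := by
    refine ⟨o3.trans o34, ?_⟩
    rw [slowPath_seg₄ o12 o23 o34, fastPath, abs_of_nonneg (by linarith)]
    unfold τ₄ τ₃ τ₂ τ₁
    field_simp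
    ring
  have hsum : τ₄ v + τ₂ v + τ₁ v + τ₃ v = num v / (1 + v) ^ 3 := by
    unfold τ₄ τ₃ τ₂ τ₁ num
    field_simp
    ring
  have hfin : AllFinite (slowPath v) (fastPath v) := ⟨⟨_, mA⟩, ⟨_, mB⟩, ⟨_, mC⟩, ⟨_, mE⟩⟩
  have lA : meetTime (slowPath v) (fastPath v) 1 1 ≤ τ₄ v := csInf_le (meetSet_bddBelow ..) mA
  have lB : meetTime (slowPath v) (fastPath v) 1 (-1) ≤ τ₂ v := csInf_le (meetSet_bddBelow ..) mB
  have lC : meetTime (slowPath v) (fastPath v) (-1) 1 ≤ τ₁ v := csInf_le (meetSet_bddBelow ..) mC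
  have lE : meetTime (slowPath v) (fastPath v) (-1) (-1) ≤ τ₃ v :=
    csInf_le (meetSet_bddBelow ..) mE
  have low := num_le_sumTimes h0 h1 h2 hf hg hfin
  have hst : sumTimes (slowPath v) (fastPath v) = num v / (1 + v) ^ 3 :=
    le_antisymm (by unfold sumTimes; linarith) low
  have hV : V v = num v / (1 + v) ^ 3 := by
    refine IsLeast.csInf_eq ⟨⟨_, hf, _, hg, hfin, hst.symm⟩, ?_⟩
    rintro S ⟨f, hf, g, hg, hfin, rfl⟩
    exact num_le_sumTimes h0 h1 h2 hf hg hfin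
  refine ⟨hV, slowPath v, hf, fastPath v, hg, hfin, hst.trans hV.symm,
    τ₁ v, τ₂ v, τ₃ v, τ₄ v, o1, o12, o23, o34, ?_, ?_, ?_, ?_, ?_⟩
  · -- Each meeting time is at most the corresponding `τ`, and the two sums agree.
    unfold sumTimes at low
    have eA := le_antisymm lA (by linarith)
    have eB := le_antisymm lB (by linarith)
    have eC := le_antisymm lC (by linarith)
    have eE := le_antisymm lE (by linarith)
    unfold timesMultiset
    rw [eA, eB, eC, eE]
    simp only [Multiset.insert_eq_cons, ← Multiset.singleton_add]
    abel
  · exact fun s _ hs => slowPath_seg₁ o12 o23 hs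
  · intro s hs hs'
    rw [slowPath_seg₂ o23 hs hs', slowPath_seg₁ o12 o23 le_rfl]
  · intro s hs hs'
    rw [slowPath_seg₃ o12 hs hs', slowPath_seg₂ o23 o12 le_rfl]
  · intro s hs _
    rw [slowPath_seg₄ o12 o23 hs, slowPath_seg₃ o12 o23 le_rfl]
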